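/- arXiv:1305.0526 — 2 statements merged into one kernel-verified Lean document; each statement's English description precedes it below -/
import Mathlib

section
/- (Euler–Maclaurin on [0,1]) Let N be a positive integer and g : ℝ → ℝ be 2N-times continuously differentiable. Then ∫_0^1 g(s) ds − (1/2)(g(0) + g(1)) = ∫_0^1 (B_{2N}(s)/(2N)!)·g^{(2N)}(s) ds − Σ_{j=1}^N (b_{2j}/(2j)!)·(g^{(2j−1)}(1) − g^{(2j−1)}(0)). -/
open Real

/-!
The functions `B_k / k!` form a chain of successive antiderivatives starting at `B_0 = 1`, so
integrating `∫ g = ∫ B_0 • g` by parts `n` times leaves the remainder `± ∫ (B_n / n!) • g⁽ⁿ⁾` and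
boundary terms. Since `B_1(1) = -B_1(0) = 1/2`, the first boundary term is the trapezoidal
average; since `B_k(1) = B_k(0) = b_k` for `k ≠ 1`, the others are multiples of
`g⁽ᵏ⁻¹⁾(1) - g⁽ᵏ⁻¹⁾(0)`, and those with odd `k` vanish along with `b_k`.
-/

section IteratedIntegrationByParts

variable {E : Type*} [NormedAddCommGroup E] [NormedSpace ℝ E] [CompleteSpace E]

theorem integral_smul_iteratedDeriv_eq_sub {u u' : ℝ → ℝ} {g : ℝ → E} {n : ℕ}
    (hu : ∀ x, HasDerivAt u (u' x) x) (hu' : Continuous u')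
    (hg : ContDiff ℝ (n + 1 : ℕ) g) (a b : ℝ) :
    ∫ x in a..b, u' x • iteratedDeriv n g x =
      u b • iteratedDeriv n g b - u a • iteratedDeriv n g a -
        ∫ x in a..b, u x • iteratedDeriv (n + 1) g x := by
  have hasDerivAt_iteratedDeriv (x : ℝ) :
      HasDerivAt (iteratedDeriv n g) (iteratedDeriv (n + 1) g x) x := by
    rw [iteratedDeriv_succ]
    exact (hg.differentiable_iteratedDeriv n (mod_cast n.lt_succ_self) x).hasDerivAt
  have by_parts := intervalIntegral.integral_smul_deriv_eq_deriv_smul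
    (fun x _ => hu x) (fun x _ => hasDerivAt_iteratedDeriv x)
    (hu'.intervalIntegrable a b)
    ((hg.continuous_iteratedDeriv (n + 1) le_rfl).intervalIntegrable a b)
  rw [by_parts, sub_sub_cancel]

theorem integral_smul_eq_integral_smul_iteratedDeriv_sub_sum {p : ℕ → ℝ → ℝ} {g : ℝ → E} {n : ℕ}
    (hp : ∀ k x, HasDerivAt (p (k + 1)) (p k x) x) (hp₀ : Continuous (p 0))
    (hg : ContDiff ℝ n g) (a b : ℝ) :
    ∫ x in a..b, p 0 x • g x =
      (-1 : ℝ) ^ n • (∫ x in a..b, p n x • iteratedDeriv n g x) -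
        ∑ k ∈ Finset.Icc 1 n, (-1 : ℝ) ^ k •
          (p k b • iteratedDeriv (k - 1) g b - p k a • iteratedDeriv (k - 1) g a) := by
  have hp_cont : ∀ k, Continuous (p k)
    | 0 => hp₀
    | k + 1 => continuous_iff_continuousAt.2 fun x => (hp k x).continuousAt
  induction n with
  | zero => simp
  | succ n ih =>
    rw [ih (hg.of_le (mod_cast n.le_succ)),
      integral_smul_iteratedDeriv_eq_sub (hp n) (hp_cont n) hg,
      Finset.sum_Icc_succ_top (Nat.le_add_left 1 n), Nat.add_sub_cancel, pow_succ]
    module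

end IteratedIntegrationByParts

section Bernoulli

theorem hasDerivAt_bernoulliFun_div_factorial (k : ℕ) (x : ℝ) :
    HasDerivAt (fun y => bernoulliFun (k + 1) y / (k + 1).factorial)
      (bernoulliFun k x / k.factorial) x := by
  convert! (antideriv_bernoulliFun k x).div_const (k.factorial : ℝ) using 2
  rw [Nat.factorial_succ, div_div]
  push_cast
  rfl

theorem bernoulliFun_eval_one_of_ne_one {k : ℕ} (hk : k ≠ 1) : bernoulliFun k 1 = bernoulli k := by
  rw [bernoulliFun_endpoints_eq_of_ne_one hk, bernoulliFun_eval_zero]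

theorem neg_one_pow_mul_bernoulli_of_ne_one {k : ℕ} (hk : k ≠ 1) :
    (-1) ^ k * bernoulli k = bernoulli k := by
  rw [← bernoulli'_eq_bernoulli, bernoulli_eq_bernoulli'_of_ne_one hk]

variable {E : Type*} [AddCommGroup E] [Module ℝ E]

theorem neg_one_pow_smul_bernoulliFun_endpoints_sub {k : ℕ} (hk : k ≠ 1) (v w : E) :
    (-1 : ℝ) ^ k • ((bernoulliFun k 1 / k.factorial) • v - (bernoulliFun k 0 / k.factorial) • w) =
      ((bernoulli k : ℝ) / k.factorial) • (v - w) := by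
  have sign : (-1 : ℝ) ^ k * bernoulli k = bernoulli k :=
    mod_cast neg_one_pow_mul_bernoulli_of_ne_one hk
  rw [bernoulliFun_eval_one_of_ne_one hk, bernoulliFun_eval_zero, ← smul_sub, smul_smul,
    ← mul_div_assoc, sign]

theorem sum_neg_one_pow_smul_bernoulliFun_endpoints_sub {n : ℕ} (hn : 1 ≤ n) (v w : ℕ → E) :
    ∑ k ∈ Finset.Icc 1 n, (-1 : ℝ) ^ k •
        ((bernoulliFun k 1 / k.factorial) • v k - (bernoulliFun k 0 / k.factorial) • w k) =
      ∑ k ∈ Finset.Icc 2 n, ((bernoulli k : ℝ) / k.factorial) • (v k - w k) -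
        (1 / 2 : ℝ) • (w 1 + v 1) := by
  have term_one : (-1 : ℝ) ^ 1 • ((bernoulliFun 1 1 / Nat.factorial 1) • v 1 -
      (bernoulliFun 1 0 / Nat.factorial 1) • w 1) = -((1 / 2 : ℝ) • (w 1 + v 1)) := by
    simp only [bernoulliFun_one, Nat.factorial_one, Nat.cast_one, div_one]
    module
  rw [← Finset.add_sum_Ioc_eq_sum_Icc hn, ← Finset.Icc_add_one_left_eq_Ioc, one_add_one_eq_two,
    term_one, neg_add_eq_sub]
  congr 1
  refine Finset.sum_congr rfl fun k hk => ?_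
  have one_lt : 1 < k := (Finset.mem_Icc.1 hk).1
  exact neg_one_pow_smul_bernoulliFun_endpoints_sub one_lt.ne' (v k) (w k)

end Bernoulli

theorem sum_Icc_two_eq_sum_even {M : Type*} [AddCommMonoid M] {f : ℕ → M}
    (hf : ∀ k, Odd k → 1 < k → f k = 0) (N : ℕ) :
    ∑ k ∈ Finset.Icc 2 (2 * N), f k = ∑ j ∈ Finset.Icc 1 N, f (2 * j) := by
  refine (Finset.sum_of_injOn (2 * ·) (fun i _ j _ hij => ?_) (fun j hj => ?_)
    (fun k hk hk_range => hf k ?_ ?_) fun _ _ => rfl).symm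
  · lia
  · simp only [Finset.coe_Icc, Set.mem_Icc] at hj ⊢
    lia
  · rw [← Nat.not_even_iff_odd]
    rintro ⟨j, rfl⟩
    rw [Finset.mem_Icc] at hk
    exact hk_range ⟨j, by simp only [Finset.coe_Icc, Set.mem_Icc]; lia, two_mul j⟩
  · exact (Finset.mem_Icc.1 hk).1

theorem euler_maclaurin_unit_interval_general {E : Type*} [NormedAddCommGroup E] [NormedSpace ℝ E]
    [CompleteSpace E] {n : ℕ} (hn : 1 ≤ n) {g : ℝ → E} (hg : ContDiff ℝ n g) :
    (∫ s in (0 : ℝ)..1, g s) - (1 / 2 : ℝ) • (g 0 + g 1) =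
      (-1 : ℝ) ^ n •
          (∫ s in (0 : ℝ)..1, (bernoulliFun n s / n.factorial) • iteratedDeriv n g s) -
        ∑ k ∈ Finset.Icc 2 n, ((bernoulli k : ℝ) / k.factorial) •
          (iteratedDeriv (k - 1) g 1 - iteratedDeriv (k - 1) g 0) := by
  have by_parts := integral_smul_eq_integral_smul_iteratedDeriv_sub_sum
    (p := fun k s => bernoulliFun k s / k.factorial) hasDerivAt_bernoulliFun_div_factorial
    ((continuous_bernoulliFun 0).div_const _) hg 0 1
  rw [sum_neg_one_pow_smul_bernoulliFun_endpoints_sub hn (fun k => iteratedDeriv (k - 1) g 1)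
    fun k => iteratedDeriv (k - 1) g 0] at by_parts
  simp only [bernoulliFun_zero, Nat.factorial_zero, Nat.cast_one, div_one, one_smul,
    Nat.sub_self, iteratedDeriv_zero] at by_parts
  rw [by_parts]
  abel

/-- **Euler–Maclaurin formula on `[0,1]`.** For `g : ℝ → ℝ` `2N`-times continuously
differentiable (`N ≥ 1`),
`∫_0^1 g - (g(0)+g(1))/2 = ∫_0^1 (B_{2N}(s)/(2N)!) g⁽²ᴺ⁾(s) ds
  - ∑_{j=1}^N (b_{2j}/(2j)!) (g⁽²ʲ⁻¹⁾(1) - g⁽²ʲ⁻¹⁾(0))`. -/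
theorem euler_maclaurin_unit_interval (N : ℕ) (hN : 0 < N) (g : ℝ → ℝ)
    (hg : ContDiff ℝ (2 * N : ℕ) g) :
    (∫ s in (0 : ℝ)..1, g s) - 1 / 2 * (g 0 + g 1) =
      (∫ s in (0 : ℝ)..1,
          Polynomial.aeval s (Polynomial.bernoulli (2 * N)) / (2 * N).factorial *
            iteratedDeriv (2 * N) g s) -
        ∑ j ∈ Finset.Icc 1 N,
          (bernoulli (2 * j) : ℝ) / (2 * j).factorial *
            (iteratedDeriv (2 * j - 1) g 1 - iteratedDeriv (2 * j - 1) g 0) := by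
  have order_two_mul := euler_maclaurin_unit_interval_general (by lia) hg
  rw [sum_Icc_two_eq_sum_even fun k hk_odd hk => by simp [bernoulli_eq_zero_of_odd hk_odd hk]]
    at order_two_mul
  simpa only [bernoulliFun, Polynomial.eval_map_algebraMap, smul_eq_mul,
    (even_two_mul N).neg_one_pow, one_mul] using order_two_mul
end

section
/- Let ε, δ ∈ (0,1]. Set N := ⌈(1/2)·log(24/ε)⌉, h := 2π/(e²·(2N+1)²), A := ⌊−(1/h)·log(3/ε)⌋, and B := ⌈(1/h)·log((1/δ)·log(3/ε))⌉. Then for every x ∈ [δ,1], |x⁻¹ − h·Σ_{j=A}^{B} e^{jh}·e^{−x·e^{jh}}| ≤ ε·x⁻¹; equivalently, (1−ε)·x⁻¹ ≤ Σ_{j=A}^{B} h·e^{jh}·e^{−x·e^{jh}} ≤ (1+ε)·x⁻¹. -/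
open Real

/-!
Substituting `s = e^t` in `x⁻¹ = ∫₀^∞ e^{-xs} ds` gives `x⁻¹ = ∫ K(t) dt` over the real line with
`K(t) = e^t e^{-x e^t}`, and `h ∑ⱼ K(jh)` is the trapezoidal rule with step `h` for this integral.
By Poisson summation its error is the sum of the values of the Fourier transform of `K` at the
points `n / h`, `n ≠ 0`. That transform is `w ↦ x^{-(1-2πiw)} Γ(1-2πiw)`, and the reflection formula
`|Γ(1+iy)|² = πy / sinh(πy)` makes it decay exponentially, so the error is of order `e^{-π²/(2h)}`.
Comparing sums with integrals, the terms with `j < A` contribute at most `e^{Ah}`, and those with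
`j > B`, where `K` is already decreasing, at most `x⁻¹ e^{-x e^{Bh}}`. The parameters make each of
the three errors at most `ε x⁻¹ / 3`.
-/

open Filter Finset
open scoped FourierTransform

section Gamma

lemma norm_Gamma_one_add_mul_I_sq {y : ℝ} (hy : y ≠ 0) :
    ‖Complex.Gamma (1 + y * Complex.I)‖ ^ 2 = π * y / sinh (π * y) := by
  have hyI : (y * Complex.I : ℂ) ≠ 0 := by simp [hy]
  have hconj : Complex.Gamma (1 - y * Complex.I)
      = (starRingEnd ℂ) (Complex.Gamma (1 + y * Complex.I)) := by
    simp [← Complex.Gamma_conj, sub_eq_add_neg]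
  have hreflection : Complex.Gamma (1 + y * Complex.I) * Complex.Gamma (1 - y * Complex.I)
      = π * y / Complex.sinh (π * y) := by
    rw [add_comm, Complex.Gamma_add_one _ hyI, mul_assoc, Complex.Gamma_mul_Gamma_one_sub,
      ← mul_assoc, Complex.sin_mul_I]
    field_simp
  rw [hconj, Complex.mul_conj, Complex.normSq_eq_norm_sq] at hreflection
  exact_mod_cast hreflection

lemma mul_exp_half_le_two_mul_sinh {z : ℝ} (hz : 0 ≤ z) : z * exp (z / 2) ≤ 2 * sinh z := by
  have hsinh : z / 2 ≤ sinh (z / 2) := self_le_sinh_iff.2 (by positivity)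
  have hcosh : exp (z / 2) ≤ 2 * cosh (z / 2) := by
    rw [cosh_eq]
    linarith [exp_pos (-(z / 2))]
  calc z * exp (z / 2) = 2 * (z / 2 * exp (z / 2)) := by ring
    _ ≤ 2 * (sinh (z / 2) * (2 * cosh (z / 2))) := by gcongr
    _ = 2 * sinh (2 * (z / 2)) := by rw [sinh_two_mul]; ring
    _ = 2 * sinh z := by ring_nf

lemma div_sinh_le_two_mul_exp (z : ℝ) : z / sinh z ≤ 2 * exp (-(|z| / 2)) := by
  rcases eq_or_ne z 0 with rfl | hz
  · simp
  have hsinh : 0 < sinh |z| := sinh_pos_iff.2 (abs_pos.2 hz)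
  calc z / sinh z ≤ |z / sinh z| := le_abs_self _
    _ = |z| / sinh |z| := by rw [abs_div, abs_sinh]
    _ ≤ 2 * exp (-(|z| / 2)) := by
      rw [exp_neg, ← div_eq_mul_inv, div_le_div_iff₀ hsinh (exp_pos _)]
      exact mul_exp_half_le_two_mul_sinh (abs_nonneg z)

lemma norm_Gamma_one_add_mul_I_le (y : ℝ) :
    ‖Complex.Gamma (1 + y * Complex.I)‖ ≤ 2 * exp (-(π * |y| / 4)) := by
  rcases eq_or_ne y 0 with rfl | hy
  · simp
  refine le_of_sq_le_sq ?_ (by positivity)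
  calc ‖Complex.Gamma (1 + y * Complex.I)‖ ^ 2 = π * y / sinh (π * y) :=
        norm_Gamma_one_add_mul_I_sq hy
    _ ≤ 2 * exp (-(|π * y| / 2)) := div_sinh_le_two_mul_exp _
    _ ≤ 4 * exp (-(|π * y| / 2)) := by gcongr; norm_num
    _ = (2 * exp (-(π * |y| / 4))) ^ 2 := by
      rw [mul_pow, ← exp_nat_mul, abs_mul, abs_of_pos pi_pos]
      push_cast
      ring_nf

end Gamma

section Trapezoid

lemma hasSum_int_pow_natAbs {K : Type*} [NormedField K] {r : K} (hr : ‖r‖ < 1) :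
    HasSum (fun n : ℤ ↦ r ^ n.natAbs) (1 + 2 * (r / (1 - r))) := by
  have hgeom : HasSum (fun n : ℕ ↦ r ^ (n + 1)) (r / (1 - r)) := by
    simpa only [pow_succ', div_eq_mul_inv] using (hasSum_geometric_of_norm_lt_one hr).mul_left r
  convert HasSum.of_add_one_of_neg_add_one (f := fun n : ℤ ↦ r ^ n.natAbs)
    (by exact_mod_cast hgeom) (by convert hgeom using 3; omega) using 1
  simp
  ring

lemma hasSum_int_exp_neg_mul_abs {c : ℝ} (hc : 0 < c) :
    HasSum (fun n : ℤ ↦ exp (-(c * |(n : ℝ)|))) (1 + 2 / (exp c - 1)) := by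
  have hpow (n : ℤ) : exp (-(c * |(n : ℝ)|)) = exp (-c) ^ n.natAbs := by
    rw [← exp_nat_mul, Nat.cast_natAbs, Int.cast_abs]
    ring_nf
  have hvalue : 2 / (exp c - 1) = 2 * (exp (-c) / (1 - exp (-c))) := by
    have : exp c - 1 ≠ 0 := (sub_pos.2 (one_lt_exp_iff.2 hc)).ne'
    rw [exp_neg]
    field_simp
  simpa only [hpow, hvalue] using hasSum_int_pow_natAbs (r := exp (-c)) (by simpa using hc)

lemma fourier_comp_mul_left {E : Type*} [NormedAddCommGroup E] [NormedSpace ℂ E]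
    (f : ℝ → E) {h : ℝ} (hh : h ≠ 0) (w : ℝ) :
    𝓕 (fun u ↦ f (h * u)) w = |h⁻¹| • 𝓕 f (w / h) := by
  rw [Real.fourier_real_eq_integral_exp_smul, Real.fourier_real_eq_integral_exp_smul,
    ← MeasureTheory.Measure.integral_comp_mul_left]
  congr! 4 with u
  field_simp

variable {f : ℝ → ℂ} {b h : ℝ}

lemma isBigO_comp_mul_left_abs_rpow (hf : f =O[cocompact ℝ] (|·| ^ (-b))) (hh : h ≠ 0) :
    (fun u ↦ f (h * u)) =O[cocompact ℝ] (|·| ^ (-b)) := by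
  have hscaled := hf.comp_tendsto (Homeomorph.mulLeft₀ h hh).isClosedEmbedding.tendsto_cocompact
  refine hscaled.trans (.of_bound (|h| ^ (-b)) (.of_forall fun u ↦ ?_))
  simp only [Function.comp_apply, Homeomorph.coe_mulLeft₀, abs_mul]
  rw [mul_rpow (abs_nonneg _) (abs_nonneg _), norm_mul, norm_of_nonneg (by positivity)]

lemma summable_int_comp_mul_left (hb : 1 < b) (hf : f =O[cocompact ℝ] (|·| ^ (-b)))
    (hh : h ≠ 0) : Summable fun n : ℤ ↦ f (h * n) :=
  summable_of_isBigO (Real.summable_abs_int_rpow hb)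
    ((isBigO_comp_mul_left_abs_rpow hf hh).comp_tendsto Int.tendsto_coe_cofinite)

lemma mul_tsum_comp_mul_left_eq_tsum_fourier (hc : Continuous f) (hb : 1 < b)
    (hf : f =O[cocompact ℝ] (|·| ^ (-b))) (hh : 0 < h)
    (hF : Summable fun n : ℤ ↦ 𝓕 f (n / h)) :
    h * ∑' n : ℤ, f (h * n) = ∑' n : ℤ, 𝓕 f (n / h) := by
  have hscale (n : ℤ) : 𝓕 (fun u ↦ f (h * u)) n = (h : ℂ)⁻¹ * 𝓕 f (n / h) := by
    rw [fourier_comp_mul_left f hh.ne', abs_of_pos (inv_pos.2 hh), Complex.real_smul,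
      Complex.ofReal_inv]
  have hpoisson := Real.tsum_eq_tsum_fourier_of_rpow_decay_of_summable
    (f := fun u ↦ f (h * u)) (by fun_prop) hb (isBigO_comp_mul_left_abs_rpow hf hh.ne')
    (by simpa only [hscale] using hF.mul_left _) 0
  simp only [zero_add, QuotientAddGroup.mk_zero, fourier_eval_zero, mul_one, hscale,
    tsum_mul_left] at hpoisson
  rw [hpoisson, mul_inv_cancel_left₀ (by exact_mod_cast hh.ne')]

theorem norm_mul_tsum_comp_mul_left_sub_integral_le {C a : ℝ} (hc : Continuous f) (hb : 1 < b)
    (hf : f =O[cocompact ℝ] (|·| ^ (-b))) (ha : 0 < a)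
    (hF : ∀ w, ‖𝓕 f w‖ ≤ C * exp (-(a * |w|))) (hh : 0 < h) :
    ‖h * ∑' n : ℤ, f (h * n) - ∫ u, f u‖ ≤ C * (2 / (exp (a / h) - 1)) := by
  have hbound (n : ℤ) : ‖𝓕 f (n / h)‖ ≤ C * exp (-(a / h * |(n : ℝ)|)) := by
    convert hF (n / h) using 4
    rw [abs_div, abs_of_pos hh]
    ring
  have hgeom := hasSum_int_exp_neg_mul_abs (div_pos ha hh)
  have hsummable : Summable fun n : ℤ ↦ 𝓕 f (n / h) :=
    .of_norm_bounded (hgeom.summable.mul_left C) hbound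
  have hzero : 𝓕 f ((0 : ℤ) / h) = ∫ u, f u := by
    simp [Real.fourier_real_eq_integral_exp_smul]
  have hgeom_ne_zero : HasSum (fun n : ℤ ↦ if n = 0 then 0 else exp (-(a / h * |(n : ℝ)|)))
      (2 / (exp (a / h) - 1)) := by
    simpa using hasSum_ite_sub_hasSum hgeom 0
  rw [mul_tsum_comp_mul_left_eq_tsum_fourier hc hb hf hh hsummable,
    hsummable.tsum_eq_add_tsum_ite 0, hzero, add_sub_cancel_left]
  refine tsum_of_norm_bounded (hgeom_ne_zero.mul_left C) fun n ↦ ?_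
  split_ifs with hn
  · simp
  · exact hbound n

end Trapezoid

section IntegerSums

lemma tsum_le_of_le_sub_succ {a g : ℕ → ℝ} (ha : ∀ k, 0 ≤ a k) (hg : ∀ k, 0 ≤ g k)
    (hag : ∀ k, a k ≤ g k - g (k + 1)) : ∑' k, a k ≤ g 0 :=
  Real.tsum_le_of_sum_range_le ha fun n ↦
    calc ∑ k ∈ range n, a k ≤ ∑ k ∈ range n, (g k - g (k + 1)) := sum_le_sum fun k _ ↦ hag k
      _ = g 0 - g n := sum_range_sub' g n
      _ ≤ g 0 := sub_le_self _ (hg n)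

lemma tsum_int_eq_tsum_add_sum_Icc_add_tsum {E : Type*} [AddCommGroup E] [UniformSpace E]
    [IsUniformAddGroup E] [CompleteSpace E] [T2Space E] {f : ℤ → E} (hf : Summable f) {A B : ℤ}
    (hAB : A ≤ B + 1) :
    ∑' j, f j = ∑' k : ℕ, f (A - (k + 1)) + ∑ j ∈ Icc A B, f j + ∑' k : ℕ, f (B + (k + 1)) := by
  obtain ⟨m, hm⟩ := Int.le.dest hAB
  have hshift : Summable fun j ↦ f (A + j) := (Equiv.addLeft A).summable_iff.2 hf
  have hnonneg : Summable fun k : ℕ ↦ f (A + k) := hshift.comp_injective Nat.cast_injective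
  have hneg : Summable fun k : ℕ ↦ f (A + -(k + 1)) :=
    hshift.comp_injective (i := fun k : ℕ ↦ -((k : ℤ) + 1)) fun k l hkl ↦ by simpa using hkl
  have hIcc : ∑ j ∈ Icc A B, f j = ∑ k ∈ range m, f (A + k) := by
    rw [Int.Icc_eq_finset_map, show (B + 1 - A).toNat = m by omega, sum_map]
    rfl
  have hupper (k : ℕ) : f (A + (k + m : ℕ)) = f (B + (k + 1)) := by
    congr 1
    omega
  rw [← (Equiv.addLeft A).tsum_eq f]
  simp only [Equiv.coe_addLeft]
  rw [tsum_of_nat_of_neg_add_one (f := fun j ↦ f (A + j)) hnonneg hneg,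
    ← hnonneg.sum_add_tsum_nat_add m, hIcc]
  simp only [hupper, sub_eq_add_neg]
  abel

end IntegerSums

/-- The integrand of `x⁻¹ = ∫₀^∞ e^{-xs} ds` after the substitution `s = e^t`, which makes it decay
rapidly at both ends of the real line. -/
noncomputable def expKernel (x t : ℝ) : ℝ := exp t * exp (-x * exp t)

namespace expKernel

variable {x : ℝ}

lemma nonneg (x t : ℝ) : 0 ≤ expKernel x t := by
  unfold expKernel
  positivity

@[fun_prop]
lemma continuous (x : ℝ) : Continuous (expKernel x) := by
  unfold expKernel
  fun_prop

lemma le_exp (hx : 0 ≤ x) (t : ℝ) : expKernel x t ≤ exp t :=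
  mul_le_of_le_one_right (exp_pos t).le <| exp_le_one_iff.2 <|
    mul_nonpos_of_nonpos_of_nonneg (neg_nonpos.2 hx) (exp_pos t).le

lemma isBigO_atTop (hx : 0 < x) (b : ℝ) : expKernel x =O[atTop] (|·| ^ b) := by
  have hdecay : expKernel x =O[atTop] fun t ↦ exp t * exp t ^ (-2 : ℝ) :=
    (Asymptotics.isBigO_refl exp atTop).mul
      ((isLittleO_exp_neg_mul_rpow_atTop hx (-2)).comp_tendsto tendsto_exp_atTop).isBigO
  have hexp (t : ℝ) : exp t * exp t ^ (-2 : ℝ) = exp (-1 * t) := by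
    rw [← exp_mul, ← exp_add]
    ring_nf
  simp only [hexp] at hdecay
  refine (hdecay.trans (isLittleO_exp_neg_mul_rpow_atTop one_pos b).isBigO).congr' .rfl ?_
  filter_upwards [eventually_ge_atTop 0] with t ht
  rw [abs_of_nonneg ht]

lemma isBigO_atBot (hx : 0 ≤ x) (b : ℝ) : expKernel x =O[atBot] (|·| ^ b) := by
  have hle : expKernel x =O[atBot] exp :=
    .of_norm_le fun t ↦ by
      simpa only [norm_of_nonneg (nonneg x t)] using le_exp hx t
  have hexp : exp =O[atBot] fun t ↦ (-t) ^ b := by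
    simpa [Function.comp_def] using ((isLittleO_exp_neg_mul_rpow_atTop one_pos b).comp_tendsto
      tendsto_neg_atBot_atTop).isBigO
  refine (hle.trans hexp).congr' .rfl ?_
  filter_upwards [eventually_le_atBot 0] with t ht
  rw [abs_of_nonpos ht]

lemma isBigO_cocompact (hx : 0 < x) (b : ℝ) :
    (fun t ↦ (expKernel x t : ℂ)) =O[cocompact ℝ] (|·| ^ b) := by
  rw [Complex.isBigO_ofReal_left, cocompact_eq_atBot_atTop, Asymptotics.isBigO_sup]
  exact ⟨isBigO_atBot hx.le b, isBigO_atTop hx b⟩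

lemma fourier_eq (hx : 0 < x) (w : ℝ) :
    𝓕 (fun t ↦ (expKernel x t : ℂ)) w =
      (1 / (x : ℂ)) ^ (1 + (-(2 * π * w) : ℝ) * Complex.I) *
        Complex.Gamma (1 + (-(2 * π * w) : ℝ) * Complex.I) := by
  set s : ℂ := 1 + (-(2 * π * w) : ℝ) * Complex.I with hs
  have hre : s.re = 1 := by simp [hs]
  have him : s.im / (2 * π) = -w := by simp [hs]; field_simp
  calc 𝓕 (fun t ↦ (expKernel x t : ℂ)) w
      = 𝓕 (fun u : ℝ ↦ (expKernel x (-u) : ℂ)) (-w) := by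
        rw [← Real.fourierInv_eq_fourier_neg, Real.fourierInv_eq_fourier_comp_neg]
        simp only [neg_neg]
    _ = mellin (fun t ↦ (exp (-x * t) : ℂ)) s := by
        rw [mellin_eq_fourier, hre, him]
        congr! 2 with u
        simp [expKernel]
    _ = (1 / (x : ℂ)) ^ s * Complex.Gamma s := by
        rw [← Complex.integral_cpow_mul_exp_neg_mul_Ioi (by simp [hre]) (by simpa using hx)]
        simp [mellin]

lemma integral_eq (hx : 0 < x) : ∫ t, (expKernel x t : ℂ) = (x : ℂ)⁻¹ := by
  simpa [Real.fourier_real_eq_integral_exp_smul] using fourier_eq hx 0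

lemma norm_fourier_le (hx : 0 < x) (w : ℝ) :
    ‖𝓕 (fun t ↦ (expKernel x t : ℂ)) w‖ ≤ 2 * x⁻¹ * exp (-(π ^ 2 / 2 * |w|)) := by
  have hpow : ‖(1 / (x : ℂ)) ^ (1 + (-(2 * π * w) : ℝ) * Complex.I)‖ = x⁻¹ := by
    rw [one_div, ← Complex.ofReal_inv, Complex.norm_cpow_eq_rpow_re_of_pos (inv_pos.2 hx)]
    simp
  have hexponent : π * |(-(2 * π * w))| / 4 = π ^ 2 / 2 * |w| := by
    rw [abs_neg, abs_mul, abs_of_pos two_pi_pos]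
    ring
  calc ‖𝓕 (fun t ↦ (expKernel x t : ℂ)) w‖
      = x⁻¹ * ‖Complex.Gamma (1 + (-(2 * π * w) : ℝ) * Complex.I)‖ := by
        rw [fourier_eq hx, norm_mul, hpow]
    _ ≤ x⁻¹ * (2 * exp (-(π * |(-(2 * π * w))| / 4))) := by
        gcongr
        exact norm_Gamma_one_add_mul_I_le _
    _ = 2 * x⁻¹ * exp (-(π ^ 2 / 2 * |w|)) := by
        rw [hexponent]
        ring

variable {h : ℝ}

lemma summable_int (hx : 0 < x) (hh : h ≠ 0) : Summable fun j : ℤ ↦ expKernel x (j * h) := by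
  simpa only [mul_comm h] using Complex.summable_ofReal.1
    (summable_int_comp_mul_left (f := fun t ↦ (expKernel x t : ℂ)) one_lt_two
      (isBigO_cocompact hx (-2)) hh)

lemma abs_mul_tsum_sub_inv_le (hx : 0 < x) (hh : 0 < h) :
    |h * ∑' j : ℤ, expKernel x (j * h) - x⁻¹| ≤ x⁻¹ * (4 / (exp (π ^ 2 / (2 * h)) - 1)) := by
  have htrapezoid := norm_mul_tsum_comp_mul_left_sub_integral_le (by fun_prop) one_lt_two
    (isBigO_cocompact hx (-2)) (by positivity) (norm_fourier_le hx) hh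
  rw [integral_eq hx, div_div] at htrapezoid
  simp only [mul_comm h (Int.cast _)] at htrapezoid
  calc |h * ∑' j : ℤ, expKernel x (j * h) - x⁻¹|
      ≤ 2 * x⁻¹ * (2 / (exp (π ^ 2 / (2 * h)) - 1)) := by exact_mod_cast htrapezoid
    _ = x⁻¹ * (4 / (exp (π ^ 2 / (2 * h)) - 1)) := by ring

lemma antitoneOn (x : ℝ) : AntitoneOn (expKernel x) {t | 1 ≤ x * exp t} := by
  intro s hs t _ hst
  have hdiff : 0 ≤ exp t - exp s := sub_nonneg.2 (exp_le_exp.2 hst)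
  have hratio : exp t ≤ exp s * exp (x * exp t - x * exp s) := by
    calc exp t = exp s + (exp t - exp s) := by ring
      _ ≤ exp s + x * exp s * (exp t - exp s) := by gcongr; exact le_mul_of_one_le_left hdiff hs
      _ = exp s * (x * exp t - x * exp s + 1) := by ring
      _ ≤ exp s * exp (x * exp t - x * exp s) := by gcongr; exact add_one_le_exp _
  calc exp t * exp (-x * exp t)
      ≤ exp s * exp (x * exp t - x * exp s) * exp (-x * exp t) := by gcongr
    _ = exp s * exp (-x * exp s) := by rw [mul_assoc, ← exp_add]; ring_nf

lemma hasDerivAt_primitive (hx : x ≠ 0) (t : ℝ) :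
    HasDerivAt (fun t ↦ -(x⁻¹ * exp (-x * exp t))) (expKernel x t) t := by
  refine ((((hasDerivAt_exp t).const_mul (-x)).exp).const_mul x⁻¹).fun_neg.congr_deriv ?_
  rw [expKernel]
  field_simp

lemma mul_apply_add_le_primitive_sub (hx : 0 < x) (hh : 0 ≤ h) {t : ℝ} (ht : 1 ≤ x * exp t) :
    h * expKernel x (t + h) ≤ x⁻¹ * exp (-x * exp t) - x⁻¹ * exp (-x * exp (t + h)) := by
  have hderiv := hasDerivAt_primitive hx.ne'
  have hmem {s : ℝ} (hs : t ≤ s) : 1 ≤ x * exp s := ht.trans (by gcongr)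
  have hmvt := (convex_Icc t (t + h)).mul_sub_le_image_sub_of_le_deriv (C := expKernel x (t + h))
    (fun s _ ↦ (hderiv s).continuousAt.continuousWithinAt)
    (fun s _ ↦ (hderiv s).differentiableAt.differentiableWithinAt)
    (fun s hs ↦ by
      obtain ⟨hts, hsh⟩ := interior_subset hs
      rw [(hderiv s).deriv]
      exact antitoneOn x (hmem hts) (hmem (hts.trans hsh)) hsh)
    t (by simpa using hh) (t + h) (by simpa using hh) (by simpa using hh)
  linarith

lemma mul_tsum_lower_le (hx : 0 ≤ x) (hh : 0 ≤ h) (t : ℝ) :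
    h * ∑' k : ℕ, expKernel x (t - (k + 1) * h) ≤ exp t := by
  have hstep (k : ℕ) :
      h * expKernel x (t - (k + 1) * h) ≤ exp (t - k * h) - exp (t - (k + 1 : ℕ) * h) := by
    push_cast
    set s := t - (k + 1) * h
    calc h * expKernel x s ≤ h * exp s := by gcongr; exact le_exp hx s
      _ ≤ exp s * exp h - exp s := by nlinarith [add_one_le_exp h, exp_pos s]
      _ = exp (t - k * h) - exp s := by rw [← exp_add]; congr 2; ring
  simpa [tsum_mul_left] using tsum_le_of_le_sub_succ (fun k ↦ mul_nonneg hh (nonneg _ _))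
    (fun k ↦ (exp_pos _).le) hstep

lemma mul_tsum_upper_le (hx : 0 < x) (hh : 0 ≤ h) {t : ℝ} (ht : 1 ≤ x * exp t) :
    h * ∑' k : ℕ, expKernel x (t + (k + 1) * h) ≤ x⁻¹ * exp (-x * exp t) := by
  have hstep (k : ℕ) : h * expKernel x (t + (k + 1) * h) ≤
      x⁻¹ * exp (-x * exp (t + k * h)) - x⁻¹ * exp (-x * exp (t + (k + 1 : ℕ) * h)) := by
    have hge : t ≤ t + k * h := le_add_of_nonneg_right (by positivity)
    have hone : 1 ≤ x * exp (t + k * h) := ht.trans (by gcongr)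
    have hmul := mul_apply_add_le_primitive_sub hx hh hone
    rw [add_assoc, ← add_one_mul] at hmul
    exact_mod_cast hmul
  simpa [tsum_mul_left] using tsum_le_of_le_sub_succ
    (g := fun k ↦ x⁻¹ * exp (-x * exp (t + k * h))) (fun k ↦ mul_nonneg hh (nonneg _ _))
    (fun k ↦ by positivity) hstep

lemma mul_tsum_le_mul_sum_Icc_add (hx : 0 < x) (hh : 0 < h) {A B : ℤ} (hAB : A ≤ B + 1)
    (hB : 1 ≤ x * exp (B * h)) :
    h * ∑' j : ℤ, expKernel x (j * h) ≤ h * ∑ j ∈ Icc A B, expKernel x (j * h) +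
      exp (A * h) + x⁻¹ * exp (-x * exp (B * h)) := by
  have hlower := mul_tsum_lower_le hx.le hh.le (A * h)
  have hupper := mul_tsum_upper_le hx hh.le hB
  simp only [← sub_mul, ← add_mul] at hlower hupper
  rw [tsum_int_eq_tsum_add_sum_Icc_add_tsum (summable_int hx hh.ne') hAB]
  push_cast
  linarith

theorem abs_inv_sub_mul_sum_Icc_le (hx : 0 < x) (hh : 0 < h) {A B : ℤ} (hAB : A ≤ B + 1)
    (hB : 1 ≤ x * exp (B * h)) :
    |x⁻¹ - h * ∑ j ∈ Icc A B, expKernel x (j * h)| ≤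
      x⁻¹ * (4 / (exp (π ^ 2 / (2 * h)) - 1)) + exp (A * h) + x⁻¹ * exp (-x * exp (B * h)) := by
  have hquadrature := abs_le.1 (abs_mul_tsum_sub_inv_le hx hh)
  have htrunc := mul_tsum_le_mul_sum_Icc_add hx hh hAB hB
  have hle : h * ∑ j ∈ Icc A B, expKernel x (j * h) ≤ h * ∑' j : ℤ, expKernel x (j * h) := by
    gcongr
    exact (summable_int hx hh.ne').sum_le_tsum _ fun j _ ↦ nonneg _ _
  have hA := exp_pos (A * h)
  have hxB : 0 < x⁻¹ * exp (-x * exp (B * h)) := by positivity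
  rw [abs_le]
  constructor <;> linarith [hquadrature.1, hquadrature.2]

end expKernel

section Parameters

variable {ε δ h : ℝ}

lemma one_le_log_three_div (hε : ε ∈ Set.Ioc (0 : ℝ) 1) : 1 ≤ log (3 / ε) := by
  rw [le_log_iff_exp_le (div_pos three_pos hε.1), le_div_iff₀ hε.1]
  exact (mul_le_of_le_one_right (exp_pos 1).le hε.2).trans (by linarith [exp_one_lt_d9])

lemma exp_le_div_of_le_neg_log {c y : ℝ} (hc : 0 < c) (hε : 0 < ε) (hy : y ≤ -log (c / ε)) :
    exp y ≤ ε / c :=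
  calc exp y ≤ exp (-log (c / ε)) := exp_le_exp.2 hy
    _ = ε / c := by rw [exp_neg, exp_log (div_pos hc hε), inv_div]

lemma four_div_exp_sub_one_le {y : ℝ} (hε : ε ∈ Set.Ioc (0 : ℝ) 1) (hy : log (24 / ε) ≤ y) :
    4 / (exp y - 1) ≤ ε / 3 := by
  obtain ⟨hε_pos, hε_le⟩ := hε
  have hexp : 24 ≤ exp y * ε := by
    rwa [← div_le_iff₀ hε_pos, ← log_le_iff_le_exp (by positivity)]
  have hexp_le : exp y * ε ≤ exp y := mul_le_of_le_one_right (exp_pos y).le hε_le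
  rw [div_le_iff₀ (by linarith)]
  linarith

lemma le_mul_exp_mul_of_log_le {L b : ℝ} (hL : 0 < L) (hδ : 0 < δ) (hh : 0 < h)
    (hb : 1 / h * log (1 / δ * L) ≤ b) : L ≤ δ * exp (b * h) := by
  rwa [one_div_mul_eq_div, div_le_iff₀ hh, log_le_iff_le_exp (by positivity), one_div_mul_eq_div,
    div_le_iff₀' hδ] at hb

lemma two_pi_div_sq_ceil_mul_le {y : ℝ} (hy : 0 ≤ y) :
    2 * π / (exp 1 ^ 2 * (2 * (⌈y / 2⌉ : ℝ) + 1) ^ 2) * y ≤ π ^ 2 / 2 := by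
  set N : ℝ := ((⌈y / 2⌉ : ℤ) : ℝ)
  have hyN : y ≤ 2 * N := by linarith [Int.le_ceil (y / 2)]
  have hexp : 2 ^ 2 ≤ exp 1 ^ 2 := by
    gcongr
    linarith [exp_one_gt_d9]
  have hsq : y ≤ (2 * N + 1) ^ 2 := by nlinarith
  rw [div_mul_eq_mul_div, div_le_iff₀ (by positivity)]
  calc 2 * π * y ≤ 2 * π * (π * (2 * N + 1) ^ 2) := by
        gcongr
        exact hsq.trans (le_mul_of_one_le_left (sq_nonneg _) (by linarith [pi_gt_three]))
    _ = π ^ 2 / 2 * (2 ^ 2 * (2 * N + 1) ^ 2) := by ring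
    _ ≤ π ^ 2 / 2 * (exp 1 ^ 2 * (2 * N + 1) ^ 2) := by gcongr

end Parameters

theorem inverse_approx_truncated_sum_general {ε δ h x : ℝ} {A B : ℤ}
    (hε : ε ∈ Set.Ioc (0 : ℝ) 1) (hδ : 0 < δ) (hh : 0 < h) (hstep : h * log (24 / ε) ≤ π ^ 2 / 2)
    (hA : A ≤ -(1 / h) * log (3 / ε)) (hB : 1 / h * log (1 / δ * log (3 / ε)) ≤ B)
    (hx : x ∈ Set.Icc δ 1) :
    |x⁻¹ - h * ∑ j ∈ Icc A B, exp (j * h) * exp (-x * exp (j * h))| ≤ ε * x⁻¹ ∧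
    (1 - ε) * x⁻¹ ≤ ∑ j ∈ Icc A B, h * exp (j * h) * exp (-x * exp (j * h)) ∧
    ∑ j ∈ Icc A B, h * exp (j * h) * exp (-x * exp (j * h)) ≤ (1 + ε) * x⁻¹ := by
  obtain ⟨hxδ, hx_le⟩ := hx
  have hx_pos : 0 < x := hδ.trans_le hxδ
  have hlog := one_le_log_three_div hε
  have hAh : A * h ≤ -log (3 / ε) := by
    rwa [neg_mul, one_div_mul_eq_div, ← neg_div, le_div_iff₀ hh] at hA
  have hxB : log (3 / ε) ≤ x * exp (B * h) :=
    (le_mul_exp_mul_of_log_le (by linarith) hδ hh hB).trans (by gcongr)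
  have hAB : (A : ℝ) ≤ B :=
    calc (A : ℝ) ≤ 0 := hA.trans (mul_nonpos_of_nonpos_of_nonneg (by simp [hh.le]) (by linarith))
      _ ≤ 1 / h * log (1 / δ * log (3 / ε)) := mul_nonneg (by positivity) <| log_nonneg <|
        one_le_mul_of_one_le_of_one_le (one_le_one_div hδ (hxδ.trans hx_le)) hlog
      _ ≤ B := hB
  have hquadrature : 4 / (exp (π ^ 2 / (2 * h)) - 1) ≤ ε / 3 :=
    four_div_exp_sub_one_le hε (by rwa [← div_div, le_div_iff₀' hh])
  have hlower : exp (A * h) ≤ x⁻¹ * (ε / 3) :=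
    (exp_le_div_of_le_neg_log three_pos hε.1 hAh).trans <|
      le_mul_of_one_le_left (div_pos hε.1 three_pos).le ((one_le_inv₀ hx_pos).2 hx_le)
  have hupper : exp (-x * exp (B * h)) ≤ ε / 3 :=
    exp_le_div_of_le_neg_log three_pos hε.1 (by linarith)
  have herror : |x⁻¹ - h * ∑ j ∈ Icc A B, expKernel x (j * h)| ≤ ε * x⁻¹ :=
    calc |x⁻¹ - h * ∑ j ∈ Icc A B, expKernel x (j * h)|
        ≤ x⁻¹ * (4 / (exp (π ^ 2 / (2 * h)) - 1)) + exp (A * h) +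
            x⁻¹ * exp (-x * exp (B * h)) :=
          expKernel.abs_inv_sub_mul_sum_Icc_le hx_pos hh
            (Int.le_add_one (by exact_mod_cast hAB)) (hlog.trans hxB)
      _ ≤ x⁻¹ * (ε / 3) + x⁻¹ * (ε / 3) + x⁻¹ * (ε / 3) := by gcongr
      _ = ε * x⁻¹ := by ring
  simp only [expKernel] at herror
  simp only [mul_assoc h, ← mul_sum]
  refine ⟨herror, ?_, ?_⟩ <;> linarith [abs_le.1 herror]

/-- **Explicit sparse approximation of `x⁻¹` by exponentials (proof of Lemma 2).**
With `N = ⌈(1/2) log (24/ε)⌉`, `h = 2π/(e²(2N+1)²)`, `A = ⌊-(1/h) log (3/ε)⌋`, and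
`B = ⌈(1/h) log ((1/δ) log (3/ε))⌉`, for every `x ∈ [δ,1]`,
`|x⁻¹ - h ∑_{j=A}^{B} e^{jh} e^{-x e^{jh}}| ≤ ε x⁻¹`; equivalently,
`(1-ε) x⁻¹ ≤ ∑_{j=A}^{B} h e^{jh} e^{-x e^{jh}} ≤ (1+ε) x⁻¹`. -/
theorem inverse_approx_truncated_sum (ε δ : ℝ) (hε : ε ∈ Set.Ioc (0 : ℝ) 1)
    (hδ : δ ∈ Set.Ioc (0 : ℝ) 1)
    (N : ℤ) (hN : N = ⌈Real.log (24 / ε) / 2⌉)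
    (h : ℝ) (hh : h = 2 * π / (Real.exp 1 ^ 2 * (2 * (N : ℝ) + 1) ^ 2))
    (A : ℤ) (hA : A = ⌊-(1 / h) * Real.log (3 / ε)⌋)
    (B : ℤ) (hB : B = ⌈(1 / h) * Real.log ((1 / δ) * Real.log (3 / ε))⌉)
    (x : ℝ) (hx : x ∈ Set.Icc δ 1) :
    |x⁻¹ - h * ∑ j ∈ Finset.Icc A B,
        Real.exp (j * h) * Real.exp (-x * Real.exp (j * h))| ≤ ε * x⁻¹ ∧
    (1 - ε) * x⁻¹ ≤ ∑ j ∈ Finset.Icc A B,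
        h * Real.exp (j * h) * Real.exp (-x * Real.exp (j * h)) ∧
    ∑ j ∈ Finset.Icc A B,
        h * Real.exp (j * h) * Real.exp (-x * Real.exp (j * h)) ≤ (1 + ε) * x⁻¹ := by
  have hlog : 0 ≤ log (24 / ε) := log_nonneg ((one_le_div hε.1).2 (by linarith [hε.2]))
  have hh_pos : 0 < h := by subst hh hN; positivity
  exact inverse_approx_truncated_sum_general hε hδ.1 hh_pos
    (by subst hh hN; exact two_pi_div_sq_ceil_mul_le hlog) (hA ▸ Int.floor_le _)
    (hB ▸ Int.le_ceil _) hx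
end
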